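/- In the finite KL-regularized contextual bandit setup with reward r : S×A → ℝ, let g : S×A → ℝ be a pessimistic estimator, i.e., g(s,a) ≤ r(s,a) for all (s,a). Let π* = π_r and π_g be the Gibbs policies of r and g respectively. Then J(π*) − J(π_g) ≤ η·Σ_{s∈S} ρ(s)·Σ_{a∈A} π*(a|s)·(r(s,a) − g(s,a))²; in particular the suboptimality of the pessimistic Gibbs policy is controlled by the squared estimation error under the distribution of the optimal policy π*. -/

import Mathlib

/-- The Gibbs policy of `g` relative to the reference policy `πref` with inverse
temperature `η`. -/
noncomputable def gibbs {S A : Type*} [Fintype A] (πref : S → A → ℝ) (η : ℝ)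
    (g : S → A → ℝ) : S → A → ℝ :=
  fun s a => πref s a * Real.exp (η * g s a) / ∑ a', πref s a' * Real.exp (η * g s a')

/-- The KL-regularized objective of a policy `π` with reward `r`. -/
noncomputable def Jkl {S A : Type*} [Fintype S] [Fintype A] (ρ : S → ℝ)
    (πref : S → A → ℝ) (η : ℝ) (r : S → A → ℝ) (π : S → A → ℝ) : ℝ :=
  ∑ s, ρ s * ∑ a, π s a * (r s a - η⁻¹ * Real.log (π s a / πref s a))

/-!
The argument works state by state. Writing `p = π_r`, `q = π_g` and `d = r - g`, the regularized
suboptimality of `q` is `η⁻¹ KL(q ‖ p)`, and the symmetrized divergence `KL(q ‖ p) + KL(p ‖ q)`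
equals `η ∑ (p - q) d`; as `KL(p ‖ q) ≥ 0`, the suboptimality is at most `∑ (p - q) d`. If `d ≥ 0`,
the partition function of `g` is at most that of `r`, so that `q ≥ p exp (-η d) ≥ p (1 - η d)`,
and hence `(p - q) d ≤ η p d²` pointwise.
-/

section

variable {S A : Type*} [Fintype A]

/-- The partition function of `g`: the normalizing constant of the Gibbs policy `gibbs πref η g`
at the state `s`. -/
noncomputable def partitionFn (πref : S → A → ℝ) (η : ℝ) (g : S → A → ℝ) (s : S) : ℝ :=
  ∑ a, πref s a * Real.exp (η * g s a)

/-- The KL-regularized value of the policy `π` at the state `s` for the reward `r`; the objective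
`Jkl` is its average over the states. -/
noncomputable def klValue (πref : S → A → ℝ) (η : ℝ) (r π : S → A → ℝ) (s : S) : ℝ :=
  ∑ a, π s a * (r s a - η⁻¹ * Real.log (π s a / πref s a))

theorem Jkl_eq_sum_klValue [Fintype S] (ρ : S → ℝ) (πref : S → A → ℝ) (η : ℝ)
    (r π : S → A → ℝ) : Jkl ρ πref η r π = ∑ s, ρ s * klValue πref η r π s :=
  rfl

variable {πref : S → A → ℝ} {η : ℝ} {r g : S → A → ℝ} {s : S}

theorem gibbs_apply (πref : S → A → ℝ) (η : ℝ) (g : S → A → ℝ) (s : S) (a : A) :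
    gibbs πref η g s a = πref s a * Real.exp (η * g s a) / partitionFn πref η g s :=
  rfl

theorem partitionFn_pos [Nonempty A] (hpos : ∀ a, 0 < πref s a) (η : ℝ) (g : S → A → ℝ) :
    0 < partitionFn πref η g s :=
  Finset.sum_pos (fun a _ => mul_pos (hpos a) (Real.exp_pos _)) Finset.univ_nonempty

theorem partitionFn_mono (hnonneg : ∀ a, 0 ≤ πref s a) (hη : 0 ≤ η)
    (hle : ∀ a, g s a ≤ r s a) : partitionFn πref η g s ≤ partitionFn πref η r s := by
  refine Finset.sum_le_sum fun a _ => ?_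
  have := hnonneg a
  have := hle a
  gcongr

theorem gibbs_nonneg (hnonneg : ∀ a, 0 ≤ πref s a) (η : ℝ) (g : S → A → ℝ) (a : A) :
    0 ≤ gibbs πref η g s a :=
  div_nonneg (mul_nonneg (hnonneg a) (Real.exp_nonneg _))
    (Finset.sum_nonneg fun b _ => mul_nonneg (hnonneg b) (Real.exp_nonneg _))

theorem sum_gibbs [Nonempty A] (hpos : ∀ a, 0 < πref s a) (η : ℝ) (g : S → A → ℝ) :
    ∑ a, gibbs πref η g s a = 1 := by
  simp only [gibbs_apply]
  rw [← Finset.sum_div]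
  exact div_self (partitionFn_pos hpos η g).ne'

theorem log_gibbs_div_ref [Nonempty A] (hpos : ∀ a, 0 < πref s a) (η : ℝ) (g : S → A → ℝ)
    (a : A) :
    Real.log (gibbs πref η g s a / πref s a) =
      η * g s a - Real.log (partitionFn πref η g s) := by
  rw [gibbs_apply, div_right_comm, mul_div_cancel_left₀ _ (hpos a).ne',
    Real.log_div (Real.exp_ne_zero _) (partitionFn_pos hpos η g).ne', Real.log_exp]

theorem klValue_gibbs [Nonempty A] (hpos : ∀ a, 0 < πref s a) (hη : η ≠ 0)
    (r g : S → A → ℝ) :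
    klValue πref η r (gibbs πref η g) s =
      ∑ a, gibbs πref η g s a * (r s a - g s a) +
        η⁻¹ * Real.log (partitionFn πref η g s) := by
  have hterm : ∀ a, r s a - η⁻¹ * (η * g s a - Real.log (partitionFn πref η g s)) =
      r s a - g s a + η⁻¹ * Real.log (partitionFn πref η g s) := fun a => by
    rw [mul_sub, inv_mul_cancel_left₀ hη]
    ring
  simp only [klValue, log_gibbs_div_ref hpos, hterm, mul_add]
  rw [Finset.sum_add_distrib, ← Finset.sum_mul, sum_gibbs hpos, one_mul]

theorem klValue_gibbs_self [Nonempty A] (hpos : ∀ a, 0 < πref s a) (hη : η ≠ 0)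
    (r : S → A → ℝ) :
    klValue πref η r (gibbs πref η r) s = η⁻¹ * Real.log (partitionFn πref η r s) := by
  simp [klValue_gibbs hpos hη]

theorem gibbs_mul_exp_neg (πref : S → A → ℝ) (η : ℝ) (r g : S → A → ℝ) (s : S) (a : A) :
    gibbs πref η r s a * Real.exp (-(η * (r s a - g s a))) =
      πref s a * Real.exp (η * g s a) / partitionFn πref η r s := by
  have hexp : η * r s a + -(η * (r s a - g s a)) = η * g s a := by ring
  rw [gibbs_apply, div_mul_eq_mul_div, mul_assoc, ← Real.exp_add, hexp]

theorem sum_gibbs_mul_exp_neg (πref : S → A → ℝ) (η : ℝ) (r g : S → A → ℝ) (s : S) :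
    ∑ a, gibbs πref η r s a * Real.exp (-(η * (r s a - g s a))) =
      partitionFn πref η g s / partitionFn πref η r s := by
  simp only [gibbs_mul_exp_neg]
  exact (Finset.sum_div _ _ _).symm

-- The difference of the two sides is `KL(π_r ‖ π_g)`; its nonnegativity is Jensen's inequality
-- for `exp`.
theorem log_partitionFn_sub_le [Nonempty A] (hpos : ∀ a, 0 < πref s a) (η : ℝ)
    (r g : S → A → ℝ) :
    Real.log (partitionFn πref η r s) - Real.log (partitionFn πref η g s) ≤
      η * ∑ a, gibbs πref η r s a * (r s a - g s a) := by
  have hr := partitionFn_pos hpos η r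
  have hg := partitionFn_pos hpos η g
  have hmean : ∑ a, gibbs πref η r s a * -(η * (r s a - g s a)) =
      -(η * ∑ a, gibbs πref η r s a * (r s a - g s a)) := by
    rw [Finset.mul_sum, ← Finset.sum_neg_distrib]
    exact Finset.sum_congr rfl fun a _ => by ring
  have hjensen : Real.exp (-(η * ∑ a, gibbs πref η r s a * (r s a - g s a))) ≤
      partitionFn πref η g s / partitionFn πref η r s := by
    rw [← hmean, ← sum_gibbs_mul_exp_neg]
    exact convexOn_exp.map_sum_le (fun a _ => gibbs_nonneg (fun b => (hpos b).le) η r a)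
      (sum_gibbs hpos η r) fun _ _ => Set.mem_univ _
  rw [← Real.le_log_iff_exp_le (div_pos hg hr), Real.log_div hg.ne' hr.ne'] at hjensen
  linarith

theorem klValue_gibbs_self_sub_le [Nonempty A] (hpos : ∀ a, 0 < πref s a) (hη : 0 < η)
    (r g : S → A → ℝ) :
    klValue πref η r (gibbs πref η r) s - klValue πref η r (gibbs πref η g) s ≤
      ∑ a, (gibbs πref η r s a - gibbs πref η g s a) * (r s a - g s a) := by
  have hlog := (inv_mul_le_iff₀ hη).2 (log_partitionFn_sub_le hpos η r g)
  simp only [klValue_gibbs_self hpos hη.ne', klValue_gibbs hpos hη.ne', sub_mul _ _ (_ - _),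
    Finset.sum_sub_distrib]
  linarith

theorem gibbs_mul_one_sub_le [Nonempty A] (hpos : ∀ a, 0 < πref s a) (hη : 0 ≤ η)
    (hle : ∀ a, g s a ≤ r s a) (a : A) :
    gibbs πref η r s a * (1 - η * (r s a - g s a)) ≤ gibbs πref η g s a := by
  have hnonneg : ∀ b, 0 ≤ πref s b := fun b => (hpos b).le
  calc gibbs πref η r s a * (1 - η * (r s a - g s a))
      ≤ gibbs πref η r s a * Real.exp (-(η * (r s a - g s a))) :=
        mul_le_mul_of_nonneg_left (Real.one_sub_le_exp_neg _) (gibbs_nonneg hnonneg η r a)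
    _ = πref s a * Real.exp (η * g s a) / partitionFn πref η r s :=
        gibbs_mul_exp_neg πref η r g s a
    _ ≤ gibbs πref η g s a :=
        div_le_div_of_nonneg_left (mul_nonneg (hnonneg a) (Real.exp_nonneg _))
          (partitionFn_pos hpos η g) (partitionFn_mono hnonneg hη hle)

theorem sum_gibbs_sub_mul_le [Nonempty A] (hpos : ∀ a, 0 < πref s a) (hη : 0 ≤ η)
    (hle : ∀ a, g s a ≤ r s a) :
    ∑ a, (gibbs πref η r s a - gibbs πref η g s a) * (r s a - g s a) ≤
      η * ∑ a, gibbs πref η r s a * (r s a - g s a) ^ 2 := by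
  rw [Finset.mul_sum]
  refine Finset.sum_le_sum fun a _ => ?_
  have hsub : gibbs πref η r s a - gibbs πref η g s a ≤
      η * gibbs πref η r s a * (r s a - g s a) := by
    linarith [gibbs_mul_one_sub_le hpos hη hle a]
  calc (gibbs πref η r s a - gibbs πref η g s a) * (r s a - g s a)
      ≤ η * gibbs πref η r s a * (r s a - g s a) * (r s a - g s a) :=
        mul_le_mul_of_nonneg_right hsub (sub_nonneg.2 (hle a))
    _ = η * (gibbs πref η r s a * (r s a - g s a) ^ 2) := by ring

end

/-- Pessimism bound: if `g ≤ r` pointwise, then the suboptimality of the Gibbs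
policy of `g` is bounded by `η` times the squared estimation error under the
distribution of the optimal policy `π* = π_r`. -/
theorem stmt6 {S A : Type*} [Fintype S] [Fintype A] [Nonempty S] [Nonempty A]
    (ρ : S → ℝ) (hρ0 : ∀ s, 0 ≤ ρ s) (hρ1 : ∑ s, ρ s = 1)
    (πref : S → A → ℝ) (hpos : ∀ s a, 0 < πref s a) (hsum : ∀ s, ∑ a, πref s a = 1)
    (η : ℝ) (hη : 0 < η) (r g : S → A → ℝ) (hpess : ∀ s a, g s a ≤ r s a) :
    Jkl ρ πref η r (gibbs πref η r) - Jkl ρ πref η r (gibbs πref η g) ≤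
      η * ∑ s, ρ s * ∑ a, gibbs πref η r s a * (r s a - g s a) ^ 2 := by
  have hstate (s : S) :
      klValue πref η r (gibbs πref η r) s - klValue πref η r (gibbs πref η g) s ≤
        η * ∑ a, gibbs πref η r s a * (r s a - g s a) ^ 2 :=
    (klValue_gibbs_self_sub_le (hpos s) hη r g).trans
      (sum_gibbs_sub_mul_le (hpos s) hη.le (hpess s))
  rw [Jkl_eq_sum_klValue, Jkl_eq_sum_klValue, ← Finset.sum_sub_distrib, Finset.mul_sum]
  refine Finset.sum_le_sum fun s _ => ?_
  rw [← mul_sub, mul_left_comm]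
  exact mul_le_mul_of_nonneg_left (hstate s) (hρ0 s)
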